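/- arXiv:0805.3149 — 2 statements merged into one kernel-verified Lean document; each statement's English description precedes it below -/
import Mathlib

section
/- Let Assumption A1(0) hold (bounded coefficients) and suppose χ_λ≥0 for all λ∈Λ₁. Let v be a bounded function on H_T such that the partial derivative D_t v exists in H_T, let F be a nonnegative integrable function on [0,T], and let C be a nonnegative bounded function on H_T with ν := sup_{H_T}(C−c) < 0. If D_t v ≤ L_h v + C·v̄₊ + F holds at every point of H_T, where v̄(t):=sup_{x∈ℝ^d} v(t,x) and a₊:=(|a|+a)/2, then for all t∈[0,T]: v̄(t) ≤ v̄₊(0) + |ν|^{-1}·sup_{[0,t]}F. -/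
open scoped BigOperators
open MeasureTheory

noncomputable section

/-- `ℝ^d` with Euclidean norm. -/
abbrev Vec (d : ℕ) := EuclideanSpace ℝ (Fin d)

namespace GK

variable {d : ℕ}

/-- forward difference `δ_{h,λ}φ`. -/
def del (h : ℝ) (l : Vec d) (φ : Vec d → ℝ) (x : Vec d) : ℝ :=
  (φ (x + h • l) - φ x) / h

/-- symmetric second difference `Δ_{h,λ}φ`. -/
def del2 (h : ℝ) (l : Vec d) (φ : Vec d → ℝ) (x : Vec d) : ℝ :=
  (φ (x + h • l) - 2 * φ x + φ (x - h • l)) / h ^ 2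

/-- `i`-th partial derivative `D_iφ`. -/
def pd (i : Fin d) (φ : Vec d → ℝ) (x : Vec d) : ℝ :=
  fderiv ℝ φ x (EuclideanSpace.single i 1)

/-- second partial derivatives `D_{ij}φ`. -/
def pd2 (i j : Fin d) (φ : Vec d → ℝ) (x : Vec d) : ℝ :=
  iteratedFDeriv ℝ 2 φ x ![EuclideanSpace.single i 1, EuclideanSpace.single j 1]

/-- The index type for `Λ = Λ₁ ∪ Λ₂`: `Sum.inl` is an element of `Λ₁`,
`Sum.inr i` stands for the vector `ℓⁱ ∈ Λ₂`. -/
abbrev Dir (L1 : Finset (Vec d)) : Type _ := {l : Vec d // l ∈ L1} ⊕ Fin d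

/-- the subtype of elements of `Λ₁`. -/
abbrev L1t (L1 : Finset (Vec d)) := {l : Vec d // l ∈ L1}

/-- the weighted difference operator `δ̄_{h,λ}`, `λ ∈ Λ`:
`τ_λ δ_{h,λ}` on `Λ₁` and `τ₀ D_i` on `Λ₂`. -/
def dbar (h τ₀ : ℝ) (τ : Vec d → ℝ) {L1 : Finset (Vec d)} :
    Dir L1 → (Vec d → ℝ) → Vec d → ℝ
  | Sum.inl l => fun φ x => τ l.1 * del h l.1 φ x
  | Sum.inr i => fun φ x => τ₀ * pd i φ x

/-- the shift operator `T_{h,λ}`, `λ ∈ Λ`: a genuine shift on `Λ₁`, the identity on `Λ₂`. -/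
def shiftD (h : ℝ) {L1 : Finset (Vec d)} : Dir L1 → (Vec d → ℝ) → Vec d → ℝ
  | Sum.inl l => fun φ x => φ (x + h • l.1)
  | Sum.inr _ => fun φ x => φ x

/-- `δ̄_{h,λ}` for a multivector `λ ∈ Λᵏ`. -/
def dbarT (h τ₀ : ℝ) (τ : Vec d → ℝ) {L1 : Finset (Vec d)} {k : ℕ}
    (lam : Fin k → Dir L1) (φ : Vec d → ℝ) : Vec d → ℝ :=
  (List.ofFn lam).foldr (fun a ψ => dbar h τ₀ τ a ψ) φ

/-- `T_{h,λ}` for a multivector `λ ∈ Λᵏ`. -/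
def shiftT (h : ℝ) {L1 : Finset (Vec d)} {k : ℕ}
    (lam : Fin k → Dir L1) (φ : Vec d → ℝ) : Vec d → ℝ :=
  (List.ofFn lam).foldr (fun a ψ => shiftD h a ψ) φ

/-- `|Λ₁|² = Σ_{λ∈Λ₁} |λ|²`. -/
def normL1sq (L1 : Finset (Vec d)) : ℝ := ∑ l ∈ L1, ‖l‖ ^ 2

/-- `‖Λ₁‖² = Σ_{λ∈Λ₁} |τ_λ λ|²`. -/
def wnormL1sq (L1 : Finset (Vec d)) (τ : Vec d → ℝ) : ℝ := ∑ l ∈ L1, ‖τ l • l‖ ^ 2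

/-- the operator `L⁰_h` (at a fixed time, `qt μ`, `pt μ` being the coefficients
as functions of `x`). -/
def L0 (h : ℝ) (L1 : Finset (Vec d)) (qt pt : Vec d → Vec d → ℝ)
    (φ : Vec d → ℝ) (x : Vec d) : ℝ :=
  h⁻¹ * ∑ l ∈ L1, qt l x * del h l φ x + ∑ l ∈ L1, pt l x * del h l φ x

/-- the quadratic form `𝒬(φ) = Σ_{μ∈Λ₁} χ_μ (δ_{h,μ}φ)²`, `χ_μ = q_μ + h p_μ`. -/
def Qform (h : ℝ) (L1 : Finset (Vec d)) (qt pt : Vec d → Vec d → ℝ)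
    (φ : Vec d → ℝ) (x : Vec d) : ℝ :=
  ∑ l ∈ L1, (qt l x + h * pt l x) * (del h l φ x) ^ 2

/-- `Q_μ φ = h⁻¹ Σ_{λ∈Λ₁} (δ̄_{h,μ} q_λ) δ_{h,λ}φ` for a multivector `μ`. -/
def Qmu (h τ₀ : ℝ) (τ : Vec d → ℝ) (L1 : Finset (Vec d)) {k : ℕ}
    (qt : Vec d → Vec d → ℝ) (lam : Fin k → Dir L1) (φ : Vec d → ℝ) (x : Vec d) : ℝ :=
  h⁻¹ * ∑ l ∈ L1, dbarT h τ₀ τ lam (qt l) x * del h l φ x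

/-- `P_μ φ = Σ_{λ∈Λ₁} (δ̄_{h,μ} p_λ) δ_{h,λ}φ` for a multivector `μ`. -/
def Pmu (h τ₀ : ℝ) (τ : Vec d → ℝ) (L1 : Finset (Vec d)) {k : ℕ}
    (pt : Vec d → Vec d → ℝ) (lam : Fin k → Dir L1) (φ : Vec d → ℝ) (x : Vec d) : ℝ :=
  ∑ l ∈ L1, dbarT h τ₀ τ lam (pt l) x * del h l φ x

/-- `L⁰_μ = Q_μ + P_μ`. -/
def L0mu (h τ₀ : ℝ) (τ : Vec d → ℝ) (L1 : Finset (Vec d)) {k : ℕ}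
    (qt pt : Vec d → Vec d → ℝ) (lam : Fin k → Dir L1) (φ : Vec d → ℝ) (x : Vec d) : ℝ :=
  Qmu h τ₀ τ L1 qt lam φ x + Pmu h τ₀ τ L1 pt lam φ x

/-- `A₁(φ) = 2 Σ_{λ∈Λ} (δ̄_{h,λ}φ) L⁰_λ T_{h,λ}φ`. -/
def A1form (h τ₀ : ℝ) (τ : Vec d → ℝ) (L1 : Finset (Vec d))
    (qt pt : Vec d → Vec d → ℝ) (φ : Vec d → ℝ) (x : Vec d) : ℝ :=
  2 * ∑ a : Dir L1, dbar h τ₀ τ a φ x * L0mu h τ₀ τ L1 qt pt ![a] (shiftD h a φ) x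

/-- membership in the class `𝔎` of bounded operators on bounded Borel functions
preserving the cone of nonnegative functions and with `𝒦1 ≤ 1`. -/
def MemFrakK (K : (Vec d → ℝ) → Vec d → ℝ) : Prop :=
  (∀ φ : Vec d → ℝ, Measurable φ → Bornology.IsBounded (Set.range φ) →
      Measurable (K φ) ∧ Bornology.IsBounded (Set.range (K φ))) ∧
  (∀ φ : Vec d → ℝ, (∀ x, 0 ≤ φ x) → ∀ x, 0 ≤ K φ x) ∧
  ∀ x, K (fun _ => (1 : ℝ)) x ≤ 1

/-- inequality (3.24.1) of Assumption 2.4 (A4), at a fixed time. -/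
def IneqA4 (h τ₀ : ℝ) (τ : Vec d → ℝ) (L1 : Finset (Vec d))
    (qt pt : Vec d → Vec d → ℝ) (ct : Vec d → ℝ) (δ K₁ : ℝ) (m : ℕ)
    (K : (Vec d → ℝ) → Vec d → ℝ) (φ : Vec d → ℝ) (x : Vec d) : Prop :=
  (m : ℝ) * A1form h τ₀ τ L1 qt pt φ x ≤
    (1 - δ) * (∑ a : Dir L1, Qform h L1 qt pt (dbar h τ₀ τ a φ) x)
    + K₁ * Qform h L1 qt pt φ x
    + 2 * (1 - δ) * ct x * K (fun y => ∑ a : Dir L1, (dbar h τ₀ τ a φ y) ^ 2) x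

/-- inequality (3.24.01) of Assumption 2.5 (A5), at a fixed time. -/
def IneqA5 (h τ₀ : ℝ) (τ : Vec d → ℝ) (L1 : Finset (Vec d))
    (qt pt : Vec d → Vec d → ℝ) (ct : Vec d → ℝ) (δ K₁ : ℝ) (n : ℕ)
    (K : (Vec d → ℝ) → Vec d → ℝ) (φ : Vec d → ℝ) (x : Vec d) : Prop :=
  (n : ℝ) * (∑ a : Dir L1, A1form h τ₀ τ L1 qt pt (dbar h τ₀ τ a φ) x)
  + (n : ℝ) * ((n : ℝ) - 1) *
      (∑ lam : Fin 2 → Dir L1,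
        dbarT h τ₀ τ lam φ x * Qmu h τ₀ τ L1 qt lam (shiftT h lam φ) x)
  ≤ (1 - δ) * (∑ lam : Fin 2 → Dir L1, Qform h L1 qt pt (dbarT h τ₀ τ lam φ) x)
    + K₁ * (∑ a : Dir L1, Qform h L1 qt pt (dbar h τ₀ τ a φ) x)
    + 2 * (1 - δ) * ct x *
        K (fun y => ∑ lam : Fin 2 → Dir L1, (dbarT h τ₀ τ lam φ y) ^ 2) x
    + K₁ * K (fun y => ∑ a : Dir L1, (dbar h τ₀ τ a φ y) ^ 2) x

/-- regularity and boundedness of the coefficients `q, p, c` (the `q,p,c` part of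
Assumption 2.1 (A1(m))). -/
def CoefReg (T : ℝ) (L1 : Finset (Vec d)) (m : ℕ)
    (q p : Vec d → ℝ → Vec d → ℝ) (c : ℝ → Vec d → ℝ) (M : ℕ → ℝ) : Prop :=
  (∀ l ∈ L1, ∀ t ∈ Set.Icc (0 : ℝ) T, ContDiff ℝ (m : ℕ∞) (q l t) ∧ ContDiff ℝ (m : ℕ∞) (p l t)) ∧
  (∀ t ∈ Set.Icc (0 : ℝ) T, ContDiff ℝ (m : ℕ∞) (c t)) ∧
  (∀ k ≤ m, ∀ l ∈ L1,
    ContinuousOn (fun tx : ℝ × Vec d => iteratedFDeriv ℝ k (q l tx.1) tx.2)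
      (Set.Icc (0 : ℝ) T ×ˢ Set.univ) ∧
    ContinuousOn (fun tx : ℝ × Vec d => iteratedFDeriv ℝ k (p l tx.1) tx.2)
      (Set.Icc (0 : ℝ) T ×ˢ Set.univ)) ∧
  (∀ k ≤ m,
    ContinuousOn (fun tx : ℝ × Vec d => iteratedFDeriv ℝ k (c tx.1) tx.2)
      (Set.Icc (0 : ℝ) T ×ˢ Set.univ)) ∧
  (∀ k ≤ m, ∀ t ∈ Set.Icc (0 : ℝ) T, ∀ x,
    (∑ l ∈ L1, (‖iteratedFDeriv ℝ k (q l t) x‖ ^ 2 + ‖iteratedFDeriv ℝ k (p l t) x‖ ^ 2))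
      + ‖iteratedFDeriv ℝ k (c t) x‖ ^ 2 ≤ (M k) ^ 2)

/-- regularity of the free terms `f, g` (the `f,g` part of Assumption 2.1 (A1(m))). -/
def FreeReg (T : ℝ) (m : ℕ) (f : ℝ → Vec d → ℝ) (g : Vec d → ℝ) : Prop :=
  (∀ t ∈ Set.Icc (0 : ℝ) T, ContDiff ℝ (m : ℕ∞) (f t)) ∧
  (∀ k ≤ m,
    ContinuousOn (fun tx : ℝ × Vec d => iteratedFDeriv ℝ k (f tx.1) tx.2)
      (Set.Icc (0 : ℝ) T ×ˢ Set.univ)) ∧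
  ContDiff ℝ (m : ℕ∞) g

/-- `u` is a bounded continuous solution of the integral equation (2.1). -/
def IsSol (h T : ℝ) (L1 : Finset (Vec d)) (q p : Vec d → ℝ → Vec d → ℝ)
    (c : ℝ → Vec d → ℝ) (f : ℝ → Vec d → ℝ) (g : Vec d → ℝ)
    (u : ℝ → Vec d → ℝ) : Prop :=
  (∃ B, ∀ t ∈ Set.Icc (0 : ℝ) T, ∀ x, |u t x| ≤ B) ∧
  ContinuousOn (fun tx : ℝ × Vec d => u tx.1 tx.2) (Set.Icc (0 : ℝ) T ×ˢ Set.univ) ∧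
  ∀ t ∈ Set.Icc (0 : ℝ) T, ∀ x,
    u t x = g x + ∫ s in (0 : ℝ)..t,
      (L0 h L1 (fun l => q l s) (fun l => p l s) (u s) x - c s x * u s x + f s x)

/-- `sup_{H_T} ψ`. -/
def supHT (T : ℝ) (ψ : ℝ → Vec d → ℝ) : ℝ :=
  sSup {r : ℝ | ∃ t ∈ Set.Icc (0 : ℝ) T, ∃ x, r = ψ t x}

/-- `F_m = Σ_{k ≤ m} sup_{H_T} |Dᵏf|`. -/
def Fnorm (T : ℝ) (m : ℕ) (f : ℝ → Vec d → ℝ) : ℝ :=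
  ∑ k ∈ Finset.range (m + 1), supHT T fun t x => ‖iteratedFDeriv ℝ k (f t) x‖

/-- `G_m = Σ_{k ≤ m} sup_{ℝ^d} |Dᵏg|`. -/
def Gnorm (m : ℕ) (g : Vec d → ℝ) : ℝ :=
  ∑ k ∈ Finset.range (m + 1), sSup (Set.range fun x => ‖iteratedFDeriv ℝ k g x‖)

end GK

open GK in
/-- The discrete maximum principle (Lemma 3.1): if `D_t v ≤ L_h v + C v̄₊ + F` on `H_T`,
`χ_λ ≥ 0` and `sup(C−c) ≤ ν < 0`, then `v̄(t) ≤ v̄₊(0) + |ν|⁻¹ sup_{[0,t]} F`. -/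
theorem stmt4 {d : ℕ} (L1 : Finset (Vec d)) (hL1 : (0 : Vec d) ∉ L1)
    (h T : ℝ) (hh : 0 < h) (hT : 0 < T) (M₀ : ℝ)
    (q p : Vec d → ℝ → Vec d → ℝ) (c : ℝ → Vec d → ℝ)
    -- Assumption A1(0): continuity and boundedness of the coefficients
    (hqc : ∀ l ∈ L1,
      ContinuousOn (fun tx : ℝ × Vec d => q l tx.1 tx.2) (Set.Icc (0 : ℝ) T ×ˢ Set.univ) ∧
      ContinuousOn (fun tx : ℝ × Vec d => p l tx.1 tx.2) (Set.Icc (0 : ℝ) T ×ˢ Set.univ))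
    (hcc : ContinuousOn (fun tx : ℝ × Vec d => c tx.1 tx.2) (Set.Icc (0 : ℝ) T ×ˢ Set.univ))
    (hbd : ∀ t ∈ Set.Icc (0 : ℝ) T, ∀ x,
      (∑ l ∈ L1, ((q l t x) ^ 2 + (p l t x) ^ 2)) + (c t x) ^ 2 ≤ M₀ ^ 2)
    -- χ_λ ≥ 0
    (hχ : ∀ l ∈ L1, ∀ t ∈ Set.Icc (0 : ℝ) T, ∀ x, 0 ≤ q l t x + h * p l t x)
    -- v bounded with time derivative vt
    (v vt : ℝ → Vec d → ℝ)
    (hv : ∃ B : ℝ, ∀ t ∈ Set.Icc (0 : ℝ) T, ∀ x, |v t x| ≤ B)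
    (hvt : ∀ t ∈ Set.Icc (0 : ℝ) T, ∀ x, HasDerivAt (fun s => v s x) (vt t x) t)
    -- F nonnegative integrable on [0,T]
    (F : ℝ → ℝ) (hFi : MeasureTheory.IntegrableOn F (Set.Icc (0 : ℝ) T))
    (hF0 : ∀ t ∈ Set.Icc (0 : ℝ) T, 0 ≤ F t)
    -- C nonnegative and bounded, with sup(C − c) ≤ ν < 0
    (C : ℝ → Vec d → ℝ)
    (hC0 : ∀ t ∈ Set.Icc (0 : ℝ) T, ∀ x, 0 ≤ C t x)
    (hCb : ∃ B : ℝ, ∀ t ∈ Set.Icc (0 : ℝ) T, ∀ x, C t x ≤ B)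
    (ν : ℝ) (hν : ν < 0)
    (hνb : ∀ t ∈ Set.Icc (0 : ℝ) T, ∀ x, C t x - c t x ≤ ν)
    -- the differential inequality D_t v ≤ L_h v + C v̄₊ + F on H_T
    (hineq : ∀ t ∈ Set.Icc (0 : ℝ) T, ∀ x,
      vt t x ≤ L0 h L1 (fun l => q l t) (fun l => p l t) (v t) x - c t x * v t x
        + C t x * max (⨆ y, v t y) 0 + F t) :
    ∀ t ∈ Set.Icc (0 : ℝ) T, ∀ SF : ℝ, (∀ s ∈ Set.Icc (0 : ℝ) t, F s ≤ SF) →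
      (⨆ x, v t x) ≤ max (⨆ x, v 0 x) 0 + |ν|⁻¹ * SF := by
  intro t ht SF hSF
  obtain ⟨B, hB⟩ := hv
  have hsub : ∀ s ∈ Set.Icc (0 : ℝ) t, s ∈ Set.Icc (0 : ℝ) T :=
    fun s hs => ⟨hs.1, hs.2.trans ht.2⟩
  have h0t : (0 : ℝ) ∈ Set.Icc (0 : ℝ) t := ⟨le_rfl, ht.1⟩
  have hSF0 : 0 ≤ SF := (hF0 0 (hsub 0 h0t)).trans (hSF 0 h0t)
  have hν' : |ν| = -ν := abs_of_neg hν
  set A : ℝ := max (⨆ x, v 0 x) 0 + |ν|⁻¹ * SF with hA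
  have hνpos : 0 < |ν| := abs_pos.mpr hν.ne
  have hAF : |ν|⁻¹ * SF ≤ A := by
    have := le_max_right (⨆ x, v 0 x) 0
    linarith
  have hq0 : 0 ≤ |ν|⁻¹ * SF := by positivity
  have hbdd : ∀ s ∈ Set.Icc (0 : ℝ) t, BddAbove (Set.range (v s)) := by
    intro s hs
    refine ⟨B, ?_⟩
    rintro _ ⟨x, rfl⟩
    exact (le_abs_self _).trans (hB s (hsub s hs) x)
  have hv0 : ∀ x, v 0 x ≤ A := by
    intro x
    have h1 := le_ciSup (hbdd 0 h0t) x
    have h2 := le_max_left (⨆ x, v 0 x) 0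
    linarith
  set V : Set ℝ := {r : ℝ | ∃ s ∈ Set.Icc (0 : ℝ) t, ∃ x, r = v s x} with hV
  have hVb : BddAbove V := by
    refine ⟨B, ?_⟩
    rintro _ ⟨s, hs, x, rfl⟩
    exact (le_abs_self _).trans (hB s (hsub s hs) x)
  have hVne : V.Nonempty := ⟨v 0 0, 0, h0t, 0, rfl⟩
  set S : ℝ := sSup V with hS
  have hvS : ∀ s ∈ Set.Icc (0 : ℝ) t, ∀ x, v s x ≤ S :=
    fun s hs x => le_csSup hVb ⟨s, hs, x, rfl⟩
  suffices hSA : S ≤ A from ciSup_le fun x => (hvS t ⟨ht.1, le_rfl⟩ x).trans hSA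
  by_contra hcon
  push Not at hcon
  have hSpos : 0 < S := by linarith
  set a : ℝ := ∑ _l ∈ L1, (|M₀| + h * |M₀|) / h ^ 2 with ha
  have ha0 : 0 ≤ a := Finset.sum_nonneg fun _ _ => by positivity
  set K : ℝ := a + |M₀| with hK
  have hK0 : 0 ≤ K := by positivity
  set η : ℝ := -(ν * S + SF) with hη
  have hηpos : 0 < η := by
    have h1 : |ν|⁻¹ * SF < S := by linarith
    have h2 : |ν| * (|ν|⁻¹ * SF) < |ν| * S := mul_lt_mul_of_pos_left h1 hνpos
    rw [mul_inv_cancel_left₀ hνpos.ne', hν'] at h2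
    linarith
  set δ : ℝ := min (S - A) (η / (K + 1)) with hδ
  have hδpos : 0 < δ := lt_min (by linarith) (by positivity)
  have hδ1 : δ ≤ S - A := min_le_left _ _
  have hδ2 : K * δ < η := by
    have h1 : δ ≤ η / (K + 1) := min_le_right _ _
    rw [le_div_iff₀ (by positivity)] at h1
    nlinarith
  have hcM : ∀ s ∈ Set.Icc (0 : ℝ) T, ∀ x, c s x ≤ |M₀| := by
    intro s hs x
    have h1 := hbd s hs x
    have h2 : 0 ≤ ∑ l ∈ L1, ((q l s x) ^ 2 + (p l s x) ^ 2) :=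
      Finset.sum_nonneg fun _ _ => by positivity
    exact (le_abs_self _).trans (sq_le_sq.mp (by linarith))
  have hqpM : ∀ l ∈ L1, ∀ s ∈ Set.Icc (0 : ℝ) T, ∀ x, q l s x ≤ |M₀| ∧ p l s x ≤ |M₀| := by
    intro l hl s hs x
    have h1 := hbd s hs x
    have h2 : (q l s x) ^ 2 + (p l s x) ^ 2 ≤ ∑ l ∈ L1, ((q l s x) ^ 2 + (p l s x) ^ 2) :=
      Finset.single_le_sum (f := fun l => (q l s x) ^ 2 + (p l s x) ^ 2)
        (fun _ _ => by positivity) hl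
    have h3 := sq_nonneg (c s x)
    have h4 := sq_nonneg (q l s x)
    have h5 := sq_nonneg (p l s x)
    exact ⟨(le_abs_self _).trans (sq_le_sq.mp (by linarith)),
      (le_abs_self _).trans (sq_le_sq.mp (by linarith))⟩
  have key : ∀ s ∈ Set.Icc (0 : ℝ) t, ∀ x, v s x = S - δ → vt s x < 0 := by
    intro s hs x hx
    have hsT := hsub s hs
    have hL : L0 h L1 (fun l => q l s) (fun l => p l s) (v s) x ≤ a * δ := by
      have e : L0 h L1 (fun l => q l s) (fun l => p l s) (v s) x
          = ∑ l ∈ L1, (q l s x + h * p l s x) / h ^ 2 * (v s (x + h • l) - v s x) := by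
        unfold L0 del
        rw [Finset.mul_sum, ← Finset.sum_add_distrib]
        refine Finset.sum_congr rfl fun l _ => ?_
        field_simp
      rw [e, ha, Finset.sum_mul]
      refine Finset.sum_le_sum fun l hl => ?_
      have h1 := hvS s hs (x + h • l)
      have h2 := hχ l hl s hsT x
      obtain ⟨h3, h4⟩ := hqpM l hl s hsT x
      calc (q l s x + h * p l s x) / h ^ 2 * (v s (x + h • l) - v s x)
          ≤ (q l s x + h * p l s x) / h ^ 2 * δ :=
            mul_le_mul_of_nonneg_left (by linarith) (by positivity)
        _ ≤ (|M₀| + h * |M₀|) / h ^ 2 * δ := by gcongr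
    have hm : max (⨆ y, v s y) 0 ≤ S := max_le (ciSup_le (hvS s hs)) hSpos.le
    have h1 := hineq s hsT x
    have h2 : C s x * max (⨆ y, v s y) 0 ≤ C s x * S :=
      mul_le_mul_of_nonneg_left hm (hC0 s hsT x)
    have h3 : (C s x - c s x) * S ≤ ν * S :=
      mul_le_mul_of_nonneg_right (hνb s hsT x) hSpos.le
    have h4 : c s x * δ ≤ |M₀| * δ := mul_le_mul_of_nonneg_right (hcM s hsT x) hδpos.le
    have h5 := hSF s hs
    rw [hx] at h1
    have h6 : K * δ = a * δ + |M₀| * δ := by rw [hK]; ring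
    nlinarith
  have hfin : ∀ s ∈ Set.Icc (0 : ℝ) t, ∀ x, v s x ≤ S - δ := by
    intro s hs x
    refine image_le_of_deriv_right_lt_deriv_boundary (f := fun s => v s x)
      (f' := fun s => vt s x) (a := 0) (b := t) (B := fun _ => S - δ) (B' := fun _ => 0)
      (fun r hr => (hvt r (hsub r hr) x).continuousAt.continuousWithinAt)
      (fun r hr => (hvt r (hsub r ⟨hr.1, hr.2.le⟩) x).hasDerivWithinAt) ?_
      (fun r => hasDerivAt_const _ _) (fun r hr he => key r ⟨hr.1, hr.2.le⟩ x he) hs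
    have := hv0 x
    show v 0 x ≤ S - δ
    linarith
  have : S ≤ S - δ := by
    refine csSup_le hVne ?_
    rintro _ ⟨s, hs, x, rfl⟩
    exact hfin s hs x
  linarith
end
end

section
/- Suppose Assumptions A1(m), A2 and A3 hold with m≥2, that condition (S′) holds (Λ₁=−Λ₁ and Dq_λ=Dq_{−λ} for all λ∈Λ₁), that τ_λ>0 for every λ∈Λ₁, and that q_λ≥κ on H_T for a constant κ>0. Then for any δ∈(0,1) there exist τ₀>0, h₀′∈(0,h₀] and a constant K₁ such that for all h∈(0,h₀′] and all smooth φ, inequality (3.24.1) holds on H_T with the identity operator as 𝒦: m·A₁(φ) ≤ (1−δ)Σ_{λ∈Λ}𝒬(δ̄_{h,λ}φ) + K₁𝒬(φ) + 2(1−δ)c·Σ_{λ∈Λ}|δ̄_{h,λ}φ|². In particular Assumption A4 is satisfied. -/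
open scoped BigOperators
open MeasureTheory

noncomputable section

namespace GK

variable {d : ℕ}

lemma del_del_neg {h : ℝ} (hh : h ≠ 0) (l : Vec d) (φ : Vec d → ℝ) (x : Vec d) :
    h⁻¹ * (del h l φ x + del h (-l) φ x) = - del h l (del h (-l) φ) x := by
  have e : x + h • l + h • (-l) = x := by simp
  simp only [del, e]
  field_simp
  ring

lemma del_const_mul (h a : ℝ) (l : Vec d) (φ : Vec d → ℝ) (x : Vec d) :
    del h l (fun y => a * φ y) x = a * del h l φ x := by
  simp only [del]; ring

lemma del_shift {h : ℝ} (hh : h ≠ 0) (l k : Vec d) (φ : Vec d → ℝ) (x : Vec d) :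
    del h l (fun y => φ (y + h • k)) x = del h l φ x + h * del h l (del h k φ) x := by
  simp only [del]
  field_simp
  ring

lemma sym_bound (L1 : Finset (Vec d)) (hs : ∀ l ∈ L1, -l ∈ L1) {h : ℝ} (hh : h ≠ 0)
    (b : Vec d → ℝ) (hb : ∀ l ∈ L1, b l = b (-l)) (B : ℝ) (hB : ∀ l ∈ L1, |b l| ≤ B)
    (hB0 : 0 ≤ B) (φ : Vec d → ℝ) (x : Vec d) :
    |h⁻¹ * ∑ l ∈ L1, b l * del h l φ x| ≤
      B * ∑ l ∈ L1, ∑ k ∈ L1, |del h l (del h k φ) x| := by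
  have e1 : ∑ l ∈ L1, b l * del h l φ x = ∑ l ∈ L1, b l * del h (-l) φ x := by
    refine Finset.sum_nbij' (fun l => -l) (fun l => -l) hs hs (by simp) (by simp) ?_
    intro l hl
    simp [hb l hl]
  have e2 : h⁻¹ * ∑ l ∈ L1, b l * del h l φ x
      = (1/2) * ∑ l ∈ L1, b l * (- del h l (del h (-l) φ) x) := by
    have : ∑ l ∈ L1, b l * (- del h l (del h (-l) φ) x)
        = h⁻¹ * (∑ l ∈ L1, b l * del h l φ x + ∑ l ∈ L1, b l * del h (-l) φ x) := by
      rw [← Finset.sum_add_distrib, Finset.mul_sum]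
      refine Finset.sum_congr rfl fun l _ => ?_
      rw [← del_del_neg hh]; ring
    rw [this, ← e1]; ring
  have e3 : |∑ l ∈ L1, b l * (- del h l (del h (-l) φ) x)| ≤
      B * ∑ l ∈ L1, ∑ k ∈ L1, |del h l (del h k φ) x| := by
    rw [Finset.mul_sum]
    refine (Finset.abs_sum_le_sum_abs _ _).trans (Finset.sum_le_sum fun l hl => ?_)
    rw [abs_mul, abs_neg]
    refine mul_le_mul (hB l hl) ?_ (abs_nonneg _) hB0
    exact Finset.single_le_sum (f := fun k => |del h l (del h k φ) x|)
      (fun _ _ => abs_nonneg _) (hs l hl)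
  rw [e2, abs_mul]
  have := abs_nonneg (∑ l ∈ L1, b l * (- del h l (del h (-l) φ) x))
  rw [abs_of_pos (by norm_num : (0:ℝ) < 1/2)]
  linarith

lemma lin_bound (L1 : Finset (Vec d)) (b f : Vec d → ℝ) (B : ℝ)
    (hB : ∀ l ∈ L1, |b l| ≤ B) : 
    |∑ l ∈ L1, b l * f l| ≤ B * ∑ l ∈ L1, |f l| := by
  rw [Finset.mul_sum]
  refine (Finset.abs_sum_le_sum_abs _ _).trans (Finset.sum_le_sum fun l hl => ?_)
  rw [abs_mul]
  exact mul_le_mul_of_nonneg_right (hB l hl) (abs_nonneg _)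

lemma del_bound {f : Vec d → ℝ} (hf : Differentiable ℝ f) {B : ℝ}
    (hB : ∀ x, ‖fderiv ℝ f x‖ ≤ B) {h : ℝ} (hh : 0 < h) (l x : Vec d) :
    |del h l f x| ≤ B * ‖l‖ := by
  have := Convex.norm_image_sub_le_of_norm_fderiv_le (𝕜 := ℝ) (s := Set.univ) (f := f) (C := B)
    (x := x) (y := x + h • l)
    (fun y _ => hf y) (fun y _ => hB y) convex_univ (Set.mem_univ _) (Set.mem_univ _)
  simp only [add_sub_cancel_left, norm_smul, Real.norm_eq_abs, abs_of_pos hh] at this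
  rw [del, abs_div, abs_of_pos hh, div_le_iff₀ hh]
  linarith

lemma del_eq_of_fderiv_eq {f g : Vec d → ℝ} (hf : Differentiable ℝ f) (hg : Differentiable ℝ g)
    (hfg : ∀ x, fderiv ℝ f x = fderiv ℝ g x) (h : ℝ) (l x : Vec d) :
    del h l f x = del h l g x := by
  have key := is_const_of_fderiv_eq_zero (𝕜 := ℝ) (hf.sub hg)
    (fun y => by rw [fderiv_sub (hf y) (hg y), hfg y, sub_self]) (x + h • l) x
  simp only [Pi.sub_apply] at key
  simp only [del]
  congr 1
  linarith

lemma pd_bound {f : Vec d → ℝ} {B : ℝ}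
    (hB : ∀ x, ‖fderiv ℝ f x‖ ≤ B) (i : Fin d) (x : Vec d) : |pd i f x| ≤ B := by
  have := (fderiv ℝ f x).le_opNorm (EuclideanSpace.single i 1)
  simp only [Real.norm_eq_abs, PiLp.norm_single, norm_one, mul_one] at this
  exact this.trans (hB x)

/-- the bound for a direction in `Λ₁`. -/
lemma inl_bound (L1 : Finset (Vec d)) (hs : ∀ l ∈ L1, -l ∈ L1) {h h₀ : ℝ} (hh : 0 < h)
    (hh0 : h ≤ h₀) (τ₀ : ℝ) (τ : Vec d → ℝ) (q p : Vec d → Vec d → ℝ) (k : L1t L1) (B : ℝ)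
    (hB0 : 0 ≤ B)
    (hqs : ∀ l ∈ L1, ∀ x, del h k.1 (q l) x = del h k.1 (q (-l)) x)
    (hqB : ∀ l ∈ L1, ∀ x, |τ k.1 * del h k.1 (q l) x| ≤ B)
    (hpB : ∀ l ∈ L1, ∀ x, |τ k.1 * del h k.1 (p l) x| ≤ B)
    (φ : Vec d → ℝ) (x : Vec d) :
    |L0mu h τ₀ τ L1 q p ![Sum.inl k] (shiftD h (Sum.inl k : Dir L1) φ) x| ≤
      B * ((2 + h₀) * (∑ l ∈ L1, ∑ k ∈ L1, |del h l (del h k φ) x|)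
        + ∑ l ∈ L1, |del h l φ x|) := by
  have e : L0mu h τ₀ τ L1 q p ![Sum.inl k] (shiftD h (Sum.inl k : Dir L1) φ) x
      = h⁻¹ * ∑ l ∈ L1, (τ k.1 * del h k.1 (q l) x) * del h l φ x
        + ∑ l ∈ L1, (τ k.1 * del h k.1 (q l) x) * del h l (del h k.1 φ) x
        + ∑ l ∈ L1, (τ k.1 * del h k.1 (p l) x) * del h l φ x
        + h * ∑ l ∈ L1, (τ k.1 * del h k.1 (p l) x) * del h l (del h k.1 φ) x := by
    simp only [L0mu, Qmu, Pmu, dbarT, shiftD, dbar, List.ofFn_succ, List.ofFn_zero,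
      List.foldr_cons, List.foldr_nil, Matrix.cons_val_zero, del_shift hh.ne']
    simp only [Finset.mul_sum, ← Finset.sum_add_distrib]
    refine Finset.sum_congr rfl fun l _ => ?_
    field_simp
    ring
  have b1 := sym_bound L1 hs hh.ne' (fun l => τ k.1 * del h k.1 (q l) x)
    (fun l hl => by simp only [hqs l hl]) B (fun l hl => hqB l hl x) hB0 φ x
  have b2 := lin_bound L1 (fun l => τ k.1 * del h k.1 (q l) x)
    (fun l => del h l (del h k.1 φ) x) B (fun l hl => hqB l hl x)
  have b3 := lin_bound L1 (fun l => τ k.1 * del h k.1 (p l) x)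
    (fun l => del h l φ x) B (fun l hl => hpB l hl x)
  have b4 := lin_bound L1 (fun l => τ k.1 * del h k.1 (p l) x)
    (fun l => del h l (del h k.1 φ) x) B (fun l hl => hpB l hl x)
  have b5 : ∑ l ∈ L1, |del h l (del h k.1 φ) x|
      ≤ ∑ l ∈ L1, ∑ k ∈ L1, |del h l (del h k φ) x| :=
    Finset.sum_le_sum fun l _ => Finset.single_le_sum (f := fun k => |del h l (del h k φ) x|)
      (fun _ _ => abs_nonneg _) k.2
  have b6 := mul_le_mul_of_nonneg_left b5 hB0
  set s2 := ∑ l ∈ L1, ∑ k ∈ L1, |del h l (del h k φ) x|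
  have s2n : 0 ≤ s2 := Finset.sum_nonneg fun _ _ => Finset.sum_nonneg fun _ _ => abs_nonneg _
  have b7 : |h * ∑ l ∈ L1, (τ k.1 * del h k.1 (p l) x) * del h l (del h k.1 φ) x|
      ≤ h₀ * (B * s2) := by
    rw [abs_mul, abs_of_pos hh]
    exact mul_le_mul hh0 (b4.trans b6) (abs_nonneg _) (hh.le.trans hh0)
  rw [e]
  refine (abs_add_le _ _).trans ((add_le_add_left (abs_add_le _ _) _).trans
    ((add_le_add_left (add_le_add_left (abs_add_le _ _) _) _).trans ?_))
  have : B * ((2 + h₀) * s2 + ∑ l ∈ L1, |del h l φ x|)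
    = B * s2 + B * s2 + B * (∑ l ∈ L1, |del h l φ x|) + h₀ * (B * s2) := by ring
  rw [this]
  linarith

/-- the bound for a direction in `Λ₂`. -/
lemma inr_bound (L1 : Finset (Vec d)) (hs : ∀ l ∈ L1, -l ∈ L1) {h : ℝ} (hh : 0 < h)
    {τ₀ : ℝ} (hτ₀ : 0 < τ₀) (τ : Vec d → ℝ) (q p : Vec d → Vec d → ℝ) (i : Fin d) (B : ℝ)
    (hB0 : 0 ≤ B)
    (hqs : ∀ l ∈ L1, ∀ x, pd i (q l) x = pd i (q (-l)) x)
    (hqB : ∀ l ∈ L1, ∀ x, |pd i (q l) x| ≤ B)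
    (hpB : ∀ l ∈ L1, ∀ x, |pd i (p l) x| ≤ B)
    (φ : Vec d → ℝ) (x : Vec d) :
    |L0mu h τ₀ τ L1 q p ![Sum.inr i] (shiftD h (Sum.inr i : Dir L1) φ) x| ≤
      τ₀ * (B * ((∑ l ∈ L1, ∑ k ∈ L1, |del h l (del h k φ) x|)
        + ∑ l ∈ L1, |del h l φ x|)) := by
  have e : L0mu h τ₀ τ L1 q p ![Sum.inr i] (shiftD h (Sum.inr i : Dir L1) φ) x
      = τ₀ * (h⁻¹ * ∑ l ∈ L1, pd i (q l) x * del h l φ x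
        + ∑ l ∈ L1, pd i (p l) x * del h l φ x) := by
    simp only [L0mu, Qmu, Pmu, dbarT, shiftD, dbar, List.ofFn_succ, List.ofFn_zero,
      List.foldr_cons, List.foldr_nil, Matrix.cons_val_zero]
    simp only [Finset.mul_sum, ← Finset.sum_add_distrib]
    refine Finset.sum_congr rfl fun l _ => ?_
    ring
  have b1 := sym_bound L1 hs hh.ne' (fun l => pd i (q l) x)
    (fun l hl => hqs l hl x) B (fun l hl => hqB l hl x) hB0 φ x
  have b3 := lin_bound L1 (fun l => pd i (p l) x)
    (fun l => del h l φ x) B (fun l hl => hpB l hl x)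
  rw [e, abs_mul, abs_of_pos hτ₀]
  refine mul_le_mul_of_nonneg_left ((abs_add_le _ _).trans ?_) hτ₀.le
  rw [mul_add]
  linarith

/-- the final elementary inequality. -/
lemma final_ineq {s1 s2 s3 E F G α β τ₀ : ℝ} (hα : 0 < α) (hβ : 0 < β)
    (ht : τ₀ ^ 2 * G ^ 2 ≤ α * β) :
    E * s1 * s2 + F * s1 ^ 2 + G * τ₀ ^ 2 * s3 * (s2 + s1) ≤
      α * s2 ^ 2 + (E ^ 2 / (2 * α) + F + α / 2) * s1 ^ 2 + β * τ₀ ^ 2 * s3 ^ 2 := by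
  have a1 : E * s1 * s2 ≤ α / 2 * s2 ^ 2 + E ^ 2 / (2 * α) * s1 ^ 2 := by
    have : α / 2 * s2 ^ 2 + E ^ 2 / (2 * α) * s1 ^ 2 - E * s1 * s2
      = (α * s2 - E * s1) ^ 2 / (2 * α) := by field_simp; ring
    have := div_nonneg (sq_nonneg (α * s2 - E * s1)) (by linarith : 0 ≤ 2 * α)
    linarith
  have a2 : G * τ₀ ^ 2 * s3 * (s2 + s1) ≤
      β * τ₀ ^ 2 * s3 ^ 2 + τ₀ ^ 2 * G ^ 2 / (4 * β) * (s2 + s1) ^ 2 := by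
    have : β * τ₀ ^ 2 * s3 ^ 2 + τ₀ ^ 2 * G ^ 2 / (4 * β) * (s2 + s1) ^ 2
        - G * τ₀ ^ 2 * s3 * (s2 + s1)
      = τ₀ ^ 2 * (2 * β * s3 - G * (s2 + s1)) ^ 2 / (4 * β) := by field_simp; ring
    have := div_nonneg (mul_nonneg (sq_nonneg τ₀) (sq_nonneg (2 * β * s3 - G * (s2 + s1))))
      (by linarith : 0 ≤ 4 * β)
    linarith
  have a3 : τ₀ ^ 2 * G ^ 2 / (4 * β) ≤ α / 4 := by
    rw [div_le_iff₀ (by linarith)]; linarith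
  have a4 := mul_le_mul_of_nonneg_right a3 (sq_nonneg (s2 + s1))
  nlinarith [sq_nonneg (s2 - s1)]

end GK

set_option maxHeartbeats 1600000

open GK in
/-- Remark 2.2, first claim: under (S′), `τ_λ > 0` and `q_λ ≥ κ > 0`, for any
`δ ∈ (0,1)` inequality (3.24.1) (Assumption A4) holds with the identity operator as
`𝒦`, for suitable `τ₀ > 0`, small enough `h₀'` and appropriate `K₁`. -/
theorem stmt11 {d : ℕ} (L1 : Finset (Vec d)) (hL1 : (0 : Vec d) ∉ L1)
    (τ : Vec d → ℝ) (hτ : ∀ l ∈ L1, 0 < τ l)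
    (h₀ T : ℝ) (hh₀ : 0 < h₀) (hT : 0 < T)
    (c₀ : ℝ) (hc₀ : 0 < c₀) (m : ℕ) (hm : 2 ≤ m) (M : ℕ → ℝ)
    (q p : Vec d → ℝ → Vec d → ℝ) (c : ℝ → Vec d → ℝ)
    -- Assumption A1(m)
    (hA1 : CoefReg T L1 m q p c M)
    -- Assumption A2
    (hA2 : ∀ t ∈ Set.Icc (0 : ℝ) T, ∀ x y : Vec d,
      (∑ l ∈ L1, q l t x • l) = ∑ l ∈ L1, q l t y • l)
    -- Assumption A3
    (hA3 : ∀ h ∈ Set.Ioc (0 : ℝ) h₀, ∀ l ∈ L1, ∀ t ∈ Set.Icc (0 : ℝ) T, ∀ x,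
      0 ≤ q l t x + h * p l t x)
    (hc : ∀ t ∈ Set.Icc (0 : ℝ) T, ∀ x, c₀ ≤ c t x)
    -- condition (S′)
    (hS' : ∀ l ∈ L1, -l ∈ L1 ∧ ∀ t ∈ Set.Icc (0 : ℝ) T, ∀ x,
      fderiv ℝ (q l t) x = fderiv ℝ (q (-l) t) x)
    -- uniform nondegeneracy `q_λ ≥ κ > 0`
    (κ : ℝ) (hκ : 0 < κ)
    (hq : ∀ l ∈ L1, ∀ t ∈ Set.Icc (0 : ℝ) T, ∀ x, κ ≤ q l t x) :
    ∀ δ ∈ Set.Ioo (0 : ℝ) 1, ∃ τ₀ > (0 : ℝ), ∃ h₀' ∈ Set.Ioc (0 : ℝ) h₀, ∃ K₁ : ℝ,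
      ∀ h ∈ Set.Ioc (0 : ℝ) h₀', ∀ φ : Vec d → ℝ, ContDiff ℝ (⊤ : ℕ∞) φ →
        ∀ t ∈ Set.Icc (0 : ℝ) T, ∀ x,
          IneqA4 h τ₀ τ L1 (fun l => q l t) (fun l => p l t) (c t) δ K₁ m
            (fun ψ => ψ) φ x := by
  intro δ hδ
  obtain ⟨hreg, -, -, -, hbd⟩ := hA1
  have hδ' : 0 < 1 - δ := by linarith [hδ.2]
  -- lower bound for the weights
  obtain ⟨θ, hθ, hθτ⟩ : ∃ θ > (0 : ℝ), ∀ l ∈ L1, θ ≤ τ l := by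
    rcases L1.eq_empty_or_nonempty with h | h
    · exact ⟨1, one_pos, by simp [h]⟩
    · obtain ⟨l, hl, hmin⟩ := L1.exists_min_image τ h
      exact ⟨τ l, hτ l hl, hmin⟩
  have hs : ∀ l ∈ L1, -l ∈ L1 := fun l hl => (hS' l hl).1
  -- bounds on the coefficients
  have h1m : 1 ≤ m := by omega
  have hqdiff : ∀ l ∈ L1, ∀ t ∈ Set.Icc (0 : ℝ) T, Differentiable ℝ (q l t) := fun l hl t ht =>
    (hreg l hl t ht).1.differentiable (by norm_cast; omega)
  have hpdiff : ∀ l ∈ L1, ∀ t ∈ Set.Icc (0 : ℝ) T, Differentiable ℝ (p l t) := fun l hl t ht =>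
    (hreg l hl t ht).2.differentiable (by norm_cast; omega)
  have hbd' : ∀ k ≤ m, ∀ t ∈ Set.Icc (0 : ℝ) T, ∀ x, ∀ l ∈ L1,
      ‖iteratedFDeriv ℝ k (q l t) x‖ ≤ |M k| ∧ ‖iteratedFDeriv ℝ k (p l t) x‖ ≤ |M k| := by
    intro k hk t ht x l hl
    have e1 := hbd k hk t ht x
    have e2 := Finset.single_le_sum
      (f := fun l => ‖iteratedFDeriv ℝ k (q l t) x‖ ^ 2 + ‖iteratedFDeriv ℝ k (p l t) x‖ ^ 2)
      (fun _ _ => by positivity) hl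
    have e3 := sq_nonneg ‖iteratedFDeriv ℝ k (c t) x‖
    have e4 := sq_nonneg ‖iteratedFDeriv ℝ k (q l t) x‖
    have e5 := sq_nonneg ‖iteratedFDeriv ℝ k (p l t) x‖
    constructor
    · exact (le_abs_self _).trans (sq_le_sq.mp (by linarith))
    · exact (le_abs_self _).trans (sq_le_sq.mp (by linarith))
  have hqB : ∀ l ∈ L1, ∀ t ∈ Set.Icc (0 : ℝ) T, ∀ x, ‖fderiv ℝ (q l t) x‖ ≤ |M 1| := by
    intro l hl t ht x
    have := (hbd' 1 h1m t ht x l hl).1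
    rwa [norm_iteratedFDeriv_one] at this
  have hpB : ∀ l ∈ L1, ∀ t ∈ Set.Icc (0 : ℝ) T, ∀ x, ‖fderiv ℝ (p l t) x‖ ≤ |M 1| := by
    intro l hl t ht x
    have := (hbd' 1 h1m t ht x l hl).2
    rwa [norm_iteratedFDeriv_one] at this
  have hp0 : ∀ l ∈ L1, ∀ t ∈ Set.Icc (0 : ℝ) T, ∀ x, |p l t x| ≤ |M 0| := by
    intro l hl t ht x
    have := (hbd' 0 (Nat.zero_le _) t ht x l hl).2
    rwa [norm_iteratedFDeriv_zero] at this
  -- constants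
  obtain ⟨Θ, hΘ0, hΘ⟩ : ∃ Θ : ℝ, 0 ≤ Θ ∧ ∀ l ∈ L1, τ l ≤ Θ :=
    ⟨∑ l ∈ L1, τ l, Finset.sum_nonneg fun l hl => (hτ l hl).le,
      fun l hl => Finset.single_le_sum (f := τ) (fun l hl => (hτ l hl).le) hl⟩
  obtain ⟨R, hR0, hR⟩ : ∃ R : ℝ, 0 ≤ R ∧ ∀ l ∈ L1, ‖l‖ ≤ R :=
    ⟨∑ l ∈ L1, ‖l‖, Finset.sum_nonneg fun l hl => norm_nonneg _,
      fun l hl => Finset.single_le_sum (f := fun l => ‖l‖) (fun l hl => norm_nonneg _) hl⟩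
  obtain ⟨B, hBdef⟩ : ∃ B : ℝ, B = |M 1| := ⟨_, rfl⟩
  have hB0 : 0 ≤ B := hBdef ▸ abs_nonneg _
  rw [← hBdef] at hqB hpB
  obtain ⟨C, hCdef⟩ : ∃ C : ℝ, C = Θ * (B * R) := ⟨_, rfl⟩
  have hC0 : 0 ≤ C := by rw [hCdef]; positivity
  obtain ⟨N, hNdef⟩ : ∃ N : ℝ, N = (L1.card : ℝ) := ⟨_, rfl⟩
  have hN0 : 0 ≤ N := by rw [hNdef]; positivity
  obtain ⟨E, hE⟩ : ∃ E : ℝ, E = 2 * m * Θ * C * (2 + h₀) := ⟨_, rfl⟩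
  obtain ⟨F, hF⟩ : ∃ F : ℝ, F = 2 * m * Θ * C := ⟨_, rfl⟩
  obtain ⟨G, hG⟩ : ∃ G : ℝ, G = 2 * m * B := ⟨_, rfl⟩
  have hF0 : 0 ≤ F := by rw [hF]; positivity
  have hG0 : 0 ≤ G := by rw [hG]; positivity
  obtain ⟨α, hα⟩ : ∃ α : ℝ, α = (1 - δ) * (κ / 2 * θ ^ 2) / (N + 1) ^ 2 := ⟨_, rfl⟩
  obtain ⟨β, hβ⟩ : ∃ β : ℝ, β = 2 * (1 - δ) * c₀ / (d + 1) := ⟨_, rfl⟩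
  have hα0 : 0 < α := by rw [hα]; positivity
  have hβ0 : 0 < β := by rw [hβ]; positivity
  obtain ⟨K', hK'⟩ : ∃ K' : ℝ, K' = E ^ 2 / (2 * α) + F + α / 2 := ⟨_, rfl⟩
  have hK'0 : 0 ≤ K' := by rw [hK']; positivity
  refine ⟨√(α * β) / (G + 1), by positivity, min h₀ (κ / (2 * (|M 0| + 1))),
    ⟨lt_min hh₀ (by positivity), min_le_left _ _⟩, K' * (N + 1) * (2 / κ), ?_⟩
  obtain ⟨τ₀, hτ₀⟩ : ∃ τ₀ : ℝ, τ₀ = √(α * β) / (G + 1) := ⟨_, rfl⟩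
  rw [← hτ₀]
  have hτ₀pos : 0 < τ₀ := by rw [hτ₀]; positivity
  have htG : τ₀ ^ 2 * G ^ 2 ≤ α * β := by
    rw [hτ₀, div_pow, Real.sq_sqrt (by positivity), div_mul_eq_mul_div,
      div_le_iff₀ (by positivity)]
    refine mul_le_mul_of_nonneg_left ?_ (by positivity)
    exact pow_le_pow_left₀ hG0 (by linarith) 2
  intro h hh φ _ t ht x
  have hhpos : 0 < h := hh.1
  have hhh₀ : h ≤ h₀ := hh.2.trans (min_le_left _ _)
  have hhκ : h * (|M 0| + 1) ≤ κ / 2 := by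
    have := hh.2.trans (min_le_right _ _)
    rw [le_div_iff₀ (by positivity)] at this
    linarith
  have hχ : ∀ l ∈ L1, κ / 2 ≤ q l t x + h * p l t x := by
    intro l hl
    have e1 := hq l hl t ht x
    have e2 := abs_le.mp (hp0 l hl t ht x)
    have e3 := mul_le_mul_of_nonneg_left e2.1 hhpos.le
    linarith
  have hQlow : ∀ ψ : Vec d → ℝ, κ / 2 * ∑ l ∈ L1, (del h l ψ x) ^ 2 ≤
      Qform h L1 (fun l => q l t) (fun l => p l t) ψ x := by
    intro ψ
    rw [Qform, Finset.mul_sum]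
    exact Finset.sum_le_sum fun l hl => mul_le_mul_of_nonneg_right (hχ l hl) (sq_nonneg _)
  obtain ⟨s1, hs1⟩ : ∃ s : ℝ, s = ∑ l ∈ L1, |del h l φ x| := ⟨_, rfl⟩
  obtain ⟨s2, hs2⟩ : ∃ s : ℝ, s = ∑ l ∈ L1, ∑ k ∈ L1, |del h l (del h k φ) x| := ⟨_, rfl⟩
  obtain ⟨s3, hs3⟩ : ∃ s : ℝ, s = ∑ i : Fin d, |pd i φ x| := ⟨_, rfl⟩
  have s1n : 0 ≤ s1 := by rw [hs1]; positivity
  have s2n : 0 ≤ s2 := by rw [hs2]; positivity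
  have s3n : 0 ≤ s3 := by rw [hs3]; positivity
  -- Cauchy-Schwarz
  have c1 : s1 ^ 2 ≤ (N + 1) * ∑ l ∈ L1, (del h l φ x) ^ 2 := by
    have := sq_sum_le_card_mul_sum_sq (s := L1) (f := fun l => |del h l φ x|)
    simp only [sq_abs] at this
    rw [← hs1, ← hNdef] at this
    have h2 : 0 ≤ ∑ l ∈ L1, (del h l φ x) ^ 2 := by positivity
    linarith
  have c2 : s2 ^ 2 ≤ (N + 1) ^ 2 * ∑ l ∈ L1, ∑ k ∈ L1, (del h l (del h k φ) x) ^ 2 := by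
    have e1 := sq_sum_le_card_mul_sum_sq (s := L1)
      (f := fun l => ∑ k ∈ L1, |del h l (del h k φ) x|)
    have e2 : ∑ l ∈ L1, (∑ k ∈ L1, |del h l (del h k φ) x|) ^ 2 ≤
        N * ∑ l ∈ L1, ∑ k ∈ L1, (del h l (del h k φ) x) ^ 2 := by
      rw [Finset.mul_sum]
      refine Finset.sum_le_sum fun l _ => ?_
      have := sq_sum_le_card_mul_sum_sq (s := L1) (f := fun k => |del h l (del h k φ) x|)
      simp only [sq_abs] at this
      rwa [← hNdef] at this
    rw [← hs2, ← hNdef] at e1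
    have e3 := mul_le_mul_of_nonneg_left e2 hN0
    have h2 : 0 ≤ ∑ l ∈ L1, ∑ k ∈ L1, (del h l (del h k φ) x) ^ 2 := by positivity
    have h3 := mul_nonneg hN0 h2
    have h4 : ∀ X : ℝ, (N + 1) ^ 2 * X = N * (N * X) + 2 * (N * X) + X := fun X => by ring
    rw [h4]
    linarith
  have c3 : s3 ^ 2 ≤ (d + 1) * ∑ i : Fin d, (pd i φ x) ^ 2 := by
    have := sq_sum_le_card_mul_sum_sq (s := (Finset.univ : Finset (Fin d)))
      (f := fun i => |pd i φ x|)
    simp only [sq_abs, Finset.card_univ, Fintype.card_fin] at this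
    rw [← hs3] at this
    have h2 : 0 ≤ ∑ i : Fin d, (pd i φ x) ^ 2 := by positivity
    linarith
  -- lower bounds for the right-hand side
  have r1 : K' * s1 ^ 2 ≤ K' * (N + 1) * (2 / κ) *
      Qform h L1 (fun l => q l t) (fun l => p l t) φ x := by
    have e := mul_le_mul_of_nonneg_left (hQlow φ)
      (by positivity : 0 ≤ K' * (N + 1) * (2 / κ))
    have e' := mul_le_mul_of_nonneg_left c1 hK'0
    refine e'.trans (le_trans (le_of_eq ?_) e)
    field_simp
  have r2 : α * s2 ^ 2 ≤ (1 - δ) * (∑ a : Dir L1,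
      Qform h L1 (fun l => q l t) (fun l => p l t) (dbar h τ₀ τ a φ) x) := by
    have e1 : κ / 2 * θ ^ 2 * ∑ l ∈ L1, ∑ k ∈ L1, (del h l (del h k φ) x) ^ 2 ≤
        ∑ a : Dir L1, Qform h L1 (fun l => q l t) (fun l => p l t) (dbar h τ₀ τ a φ) x := by
      rw [Fintype.sum_sum_type]
      have e2 : 0 ≤ ∑ i : Fin d, Qform h L1 (fun l => q l t) (fun l => p l t)
          (dbar h τ₀ τ (Sum.inr i : Dir L1) φ) x := by
        refine Finset.sum_nonneg fun i _ => le_trans ?_ (hQlow _)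
        positivity
      have e3 : κ / 2 * θ ^ 2 * ∑ l ∈ L1, ∑ k ∈ L1, (del h l (del h k φ) x) ^ 2 ≤
          ∑ k : {l : Vec d // l ∈ L1}, Qform h L1 (fun l => q l t) (fun l => p l t)
          (dbar h τ₀ τ (Sum.inl k : Dir L1) φ) x := by
        rw [Finset.sum_comm, Finset.mul_sum, ← Finset.sum_coe_sort L1]
        refine Finset.sum_le_sum fun k _ => le_trans ?_ (hQlow _)
        simp only [dbar, del_const_mul, mul_pow, ← Finset.mul_sum]
        rw [mul_assoc]
        have := hθτ k.1 k.2
        gcongr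
      linarith
    have e4 := mul_le_mul_of_nonneg_left e1 hδ'.le
    have e5 := mul_le_mul_of_nonneg_left c2 hα0.le
    refine e5.trans (le_trans (le_of_eq ?_) e4)
    rw [hα]
    field_simp
  have r3 : β * τ₀ ^ 2 * s3 ^ 2 ≤ 2 * (1 - δ) * c t x *
      ∑ a : Dir L1, (dbar h τ₀ τ a φ x) ^ 2 := by
    have e1 : τ₀ ^ 2 * ∑ i : Fin d, (pd i φ x) ^ 2 ≤ ∑ a : Dir L1, (dbar h τ₀ τ a φ x) ^ 2 := by
      rw [Fintype.sum_sum_type]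
      have : 0 ≤ ∑ k : {l : Vec d // l ∈ L1}, (dbar h τ₀ τ (Sum.inl k : Dir L1) φ x) ^ 2 := by
        positivity
      have e2 : ∑ i : Fin d, (dbar h τ₀ τ (Sum.inr i : Dir L1) φ x) ^ 2
          = τ₀ ^ 2 * ∑ i : Fin d, (pd i φ x) ^ 2 := by
        simp only [dbar, mul_pow, Finset.mul_sum]
      linarith
    have hcx := hc t ht x
    have e3 : 2 * (1 - δ) * c₀ * (τ₀ ^ 2 * ∑ i : Fin d, (pd i φ x) ^ 2) ≤ 2 * (1 - δ) * c t x *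
      ∑ a : Dir L1, (dbar h τ₀ τ a φ x) ^ 2 := by
      gcongr
      have := hc₀.le.trans hcx
      positivity
    have e5 := mul_le_mul_of_nonneg_left c3 (by positivity : 0 ≤ β * τ₀ ^ 2)
    refine e5.trans (le_trans (le_of_eq ?_) e3)
    rw [hβ]
    field_simp
  -- upper bound for the left-hand side
  have u1 : ∑ k : {l : Vec d // l ∈ L1}, dbar h τ₀ τ (Sum.inl k : Dir L1) φ x *
      L0mu h τ₀ τ L1 (fun l => q l t) (fun l => p l t) ![Sum.inl k]
        (shiftD h (Sum.inl k : Dir L1) φ) x ≤ Θ * s1 * (C * ((2 + h₀) * s2 + s1)) := by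
    rw [hs1, Finset.mul_sum, Finset.sum_mul, ← Finset.sum_coe_sort L1, ← hs1]
    refine Finset.sum_le_sum fun k _ => ?_
    have hτk := hτ k.1 k.2
    have aux : ∀ f : Vec d → ℝ, Differentiable ℝ f → (∀ y, ‖fderiv ℝ f y‖ ≤ B) →
        ∀ y, |τ k.1 * del h k.1 f y| ≤ C := by
      intro f hf hfB y
      rw [abs_mul, abs_of_pos hτk, hCdef]
      refine mul_le_mul (hΘ k.1 k.2) ?_ (abs_nonneg _) hΘ0
      exact (del_bound hf hfB hhpos _ _).trans (mul_le_mul_of_nonneg_left (hR k.1 k.2) hB0)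
    have b := inl_bound L1 hs hhpos hhh₀ τ₀ τ (fun l => q l t) (fun l => p l t) k C hC0
      (fun l hl y => del_eq_of_fderiv_eq (hqdiff l hl t ht) (hqdiff _ (hs l hl) t ht)
        ((hS' l hl).2 t ht) _ _ _)
      (fun l hl => aux _ (hqdiff l hl t ht) (hqB l hl t ht))
      (fun l hl => aux _ (hpdiff l hl t ht) (hpB l hl t ht)) φ x
    rw [← hs1, ← hs2] at b
    refine (le_abs_self _).trans ?_
    rw [abs_mul]
    refine mul_le_mul ?_ b (abs_nonneg _) (by positivity)
    simp only [dbar]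
    rw [abs_mul, abs_of_pos hτk]
    exact mul_le_mul_of_nonneg_right (hΘ k.1 k.2) (abs_nonneg _)
  have u2 : ∑ i : Fin d, dbar h τ₀ τ (Sum.inr i : Dir L1) φ x *
      L0mu h τ₀ τ L1 (fun l => q l t) (fun l => p l t) ![Sum.inr i]
        (shiftD h (Sum.inr i : Dir L1) φ) x ≤ τ₀ * s3 * (τ₀ * (B * (s2 + s1))) := by
    rw [hs3, Finset.mul_sum, Finset.sum_mul]
    refine Finset.sum_le_sum fun i _ => ?_
    have b := inr_bound L1 hs hhpos hτ₀pos τ (fun l => q l t) (fun l => p l t) i B hB0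
      (fun l hl y => by simp only [pd, (hS' l hl).2 t ht y])
      (fun l hl => pd_bound (hqB l hl t ht) i)
      (fun l hl => pd_bound (hpB l hl t ht) i) φ x
    rw [← hs1, ← hs2] at b
    refine (le_abs_self _).trans ?_
    rw [abs_mul]
    refine mul_le_mul ?_ b (abs_nonneg _) (by positivity)
    simp only [dbar]
    rw [abs_mul, abs_of_pos hτ₀pos]
  have key := final_ineq (s1 := s1) (s2 := s2) (s3 := s3) (E := E) (F := F) hα0 hβ0 htG
  rw [← hK'] at key
  simp only [IneqA4]
  refine le_trans ?_ (key.trans (add_le_add (add_le_add r2 r1) r3))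
  rw [A1form, Fintype.sum_sum_type]
  have u3 := mul_le_mul_of_nonneg_left (add_le_add u1 u2) (by positivity : (0 : ℝ) ≤ m * 2)
  rw [← mul_assoc]
  refine u3.trans (le_of_eq ?_)
  rw [hE, hF, hG]
  ring
end
end
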